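/- Let a, b ≥ 1, let μ₋, μ₊ = ((√b ∓ √(a(a+b-1)))/(a+b))², and set R(w) = (-a - b + w + √((a+b)² + 2(a-b)w + w²))/(2w) for w ≠ 0. There exists ε > 0 such that for all w with 0 < w < ε: R(w) + 1/w > μ₊ and ∫_{μ₋}^{μ₊} (1/(R(w) + 1/w - x)) · (a+b)√((μ₊-x)(x-μ₋))/(2πx(1-x)) dx = w. (That is, R is the R-transform of the Wachter law.) -/

import Mathlib

open Real

/-!
The partial fraction decomposition
`1 / (x (1 - x) (z - x)) = 1 / (z x) + 1 / ((z - 1) (1 - x)) - 1 / (z (z - 1) (z - x))` reduces the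
Cauchy transform of the Wachter law to the classical Cauchy transform of a semicircle, evaluated at
the poles `0`, `1` and `z`. The edges satisfy
`(a + b)² (z - μ₋) (z - μ₊) = ((a + b - 2) z - (a - 1))² + 4 (a + b - 1) z (z - 1)`, so the square
roots arising at `0` and `1` are rational, and `G(z) = w` becomes a quadratic equation which
`z = R(w) + 1 / w` solves.
-/

section SemicircleCauchyTransform

open Set intervalIntegral MeasureTheory

/-- A primitive of `√(1 - s²) / (c - s)` on `(-1, 1)` for `c ≥ 1`. It is continuous on `[-1, 1]`
even for `c = 1`, where the argument of the last `arcsin` is the constant `-1` off `s = 1`, as the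
coefficient `√(c² - 1)` then vanishes. -/
noncomputable def semicirclePrimitive (c s : ℝ) : ℝ :=
  c * arcsin s - √(1 - s ^ 2) - √(c ^ 2 - 1) * arcsin ((c * s - 1) / (c - s))

lemma hasDerivAt_sqrt_one_sub_sq {s : ℝ} (hs : s ∈ Ioo (-1 : ℝ) 1) :
    HasDerivAt (fun s : ℝ => √(1 - s ^ 2)) (-s / √(1 - s ^ 2)) s := by
  have hpos : 0 < 1 - s ^ 2 := by nlinarith [hs.1, hs.2]
  have hsq : HasDerivAt (fun s : ℝ => 1 - s ^ 2) (2 * -s) s := by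
    simpa using (hasDerivAt_pow 2 s).const_sub 1
  exact (hsq.sqrt hpos.ne').congr_deriv (mul_div_mul_left _ _ two_ne_zero)

lemma hasDerivAt_arcsin_moebius {c s : ℝ} (hc : 1 < c) (hs : s ∈ Ioo (-1 : ℝ) 1) :
    HasDerivAt (fun s => arcsin ((c * s - 1) / (c - s)))
      (√(c ^ 2 - 1) / ((c - s) * √(1 - s ^ 2))) s := by
  have hden : 0 < c - s := by linarith [hs.2]
  have hq : 0 < c ^ 2 - 1 := by nlinarith
  have hr : 0 < 1 - s ^ 2 := by nlinarith [hs.1, hs.2]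
  have hq_sq : √(c ^ 2 - 1) ^ 2 = c ^ 2 - 1 := sq_sqrt hq.le
  have hone_sub : 1 - ((c * s - 1) / (c - s)) ^ 2 =
      (√(c ^ 2 - 1) * √(1 - s ^ 2) / (c - s)) ^ 2 := by
    rw [div_pow, div_pow, mul_pow, hq_sq, sq_sqrt hr.le]
    field_simp
    ring
  have hlt : |(c * s - 1) / (c - s)| < 1 := by
    have : 0 < (√(c ^ 2 - 1) * √(1 - s ^ 2) / (c - s)) ^ 2 := by positivity
    exact (sq_lt_one_iff_abs_lt_one _).mp (by linarith)
  have hmoebius : HasDerivAt (fun s => (c * s - 1) / (c - s)) ((c ^ 2 - 1) / (c - s) ^ 2) s := by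
    have hnum : HasDerivAt (fun s => c * s - 1) c s := by
      simpa using ((hasDerivAt_id s).const_mul c).sub_const 1
    have hdenom : HasDerivAt (fun s => c - s) (-1) s := (hasDerivAt_id s).const_sub c
    exact (hnum.div hdenom hden.ne').congr_deriv (by ring)
  refine ((hasDerivAt_arcsin (abs_lt.mp hlt).1.ne' (abs_lt.mp hlt).2.ne).comp s
    hmoebius).congr_deriv ?_
  rw [hone_sub, sqrt_sq (by positivity)]
  field_simp
  exact hq_sq.symm

lemma hasDerivAt_semicirclePrimitive {c s : ℝ} (hc : 1 ≤ c) (hs : s ∈ Ioo (-1 : ℝ) 1) :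
    HasDerivAt (semicirclePrimitive c) (√(1 - s ^ 2) / (c - s)) s := by
  have hden : 0 < c - s := by linarith [hs.2]
  have hq : 0 ≤ c ^ 2 - 1 := by nlinarith
  have hr : 0 < 1 - s ^ 2 := by nlinarith [hs.1, hs.2]
  have hlast : HasDerivAt (fun s => √(c ^ 2 - 1) * arcsin ((c * s - 1) / (c - s)))
      ((c ^ 2 - 1) / ((c - s) * √(1 - s ^ 2))) s := by
    rcases hc.eq_or_lt with rfl | hc
    · simpa using hasDerivAt_const s (0 : ℝ)
    · refine ((hasDerivAt_arcsin_moebius hc hs).const_mul _).congr_deriv ?_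
      rw [mul_div_assoc', mul_self_sqrt hq]
  refine ((((hasDerivAt_arcsin hs.1.ne' hs.2.ne).const_mul c).sub
    (hasDerivAt_sqrt_one_sub_sq hs)).sub hlast).congr_deriv ?_
  field_simp
  rw [sq_sqrt hr.le]
  ring

lemma continuousOn_semicirclePrimitive {c : ℝ} (hc : 1 ≤ c) :
    ContinuousOn (semicirclePrimitive c) (Icc (-1) 1) := by
  have hlast : ContinuousOn (fun s => √(c ^ 2 - 1) * arcsin ((c * s - 1) / (c - s)))
      (Icc (-1) 1) := by
    rcases hc.eq_or_lt with rfl | hc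
    · simpa using continuousOn_const
    · refine continuousOn_const.mul (continuous_arcsin.comp_continuousOn ?_)
      exact ContinuousOn.div (by fun_prop) (by fun_prop) fun s hs => by linarith [hs.2]
  have hrest : Continuous fun s => c * arcsin s - √(1 - s ^ 2) := by
    have := continuous_arcsin
    fun_prop
  exact hrest.continuousOn.sub hlast

lemma semicirclePrimitive_one {c : ℝ} (hc : 1 ≤ c) :
    semicirclePrimitive c 1 = (c - √(c ^ 2 - 1)) * (π / 2) := by
  rcases hc.eq_or_lt with rfl | hc
  · simp [semicirclePrimitive]
  · rw [semicirclePrimitive, mul_one, div_self (by linarith), arcsin_one]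
    norm_num
    ring

lemma semicirclePrimitive_neg_one {c : ℝ} (hc : 1 ≤ c) :
    semicirclePrimitive c (-1) = -((c - √(c ^ 2 - 1)) * (π / 2)) := by
  rw [semicirclePrimitive, show c * -1 - 1 = -(c - -1) by ring, neg_div,
    div_self (by linarith), arcsin_neg, arcsin_one]
  norm_num
  ring

lemma intervalIntegrable_sqrt_one_sub_sq_div_sub {c : ℝ} (hc : 1 ≤ c) :
    IntervalIntegrable (fun s => √(1 - s ^ 2) / (c - s)) volume (-1) 1 := by
  have hle : (-1 : ℝ) ≤ 1 := by norm_num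
  apply intervalIntegrable_deriv_of_nonneg (g := semicirclePrimitive c)
  · rw [uIcc_of_le hle]
    exact continuousOn_semicirclePrimitive hc
  all_goals
    rw [min_eq_left hle, max_eq_right hle]
    intro s hs
  · exact hasDerivAt_semicirclePrimitive hc hs
  · exact div_nonneg (sqrt_nonneg _) (by linarith [hs.2])

lemma integral_sqrt_one_sub_sq_div_sub {c : ℝ} (hc : 1 ≤ c) :
    ∫ s in (-1 : ℝ)..1, √(1 - s ^ 2) / (c - s) = π * (c - √(c ^ 2 - 1)) := by
  rw [integral_eq_sub_of_hasDerivAt_of_le (by norm_num) (continuousOn_semicirclePrimitive hc)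
    (fun s hs => hasDerivAt_semicirclePrimitive hc hs)
    (intervalIntegrable_sqrt_one_sub_sq_div_sub hc),
    semicirclePrimitive_one hc, semicirclePrimitive_neg_one hc]
  ring

variable {l u z : ℝ}

lemma sqrt_mul_div_sub_eq_rescale (hlu : l < u) (z x : ℝ) :
    √((u - x) * (x - l)) / (z - x) =
      √(1 - (((u - l) / 2)⁻¹ * (x - (l + u) / 2)) ^ 2) /
        (((u - l) / 2)⁻¹ * (z - (l + u) / 2) - ((u - l) / 2)⁻¹ * (x - (l + u) / 2)) := by
  obtain ⟨h, hh⟩ : ∃ h, (u - l) / 2 = h := ⟨_, rfl⟩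
  have hpos : 0 < h := by linarith
  rw [hh, ← mul_sub, sub_sub_sub_cancel_right]
  have hroot : (u - x) * (x - l) = h ^ 2 * (1 - (h⁻¹ * (x - (l + u) / 2)) ^ 2) := by
    rw [mul_sub (h ^ 2), ← mul_pow, mul_inv_cancel_left₀ hpos.ne', ← hh]
    ring
  rw [hroot, sqrt_mul (by positivity), sqrt_sq hpos.le, mul_comm h⁻¹ (z - x), ← div_eq_mul_inv,
    div_div_eq_mul_div, mul_comm h]

lemma one_le_inv_half_length_mul_sub_midpoint (hlu : l < u) (hz : u ≤ z) :
    1 ≤ ((u - l) / 2)⁻¹ * (z - (l + u) / 2) := by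
  rw [le_inv_mul_iff₀ (by linarith)]
  linarith

lemma intervalIntegrable_sqrt_mul_div_sub (hlu : l ≤ u) (hz : u ≤ z) :
    IntervalIntegrable (fun x => √((u - x) * (x - l)) / (z - x)) volume l u := by
  rcases hlu.eq_or_lt with rfl | hlu
  · exact .refl
  simp only [sqrt_mul_div_sub_eq_rescale hlu z]
  convert ((intervalIntegrable_sqrt_one_sub_sq_div_sub
    (one_le_inv_half_length_mul_sub_midpoint hlu hz)).comp_mul_left
      (c := ((u - l) / 2)⁻¹)).comp_sub_right ((l + u) / 2) using 1
  all_goals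
    rw [div_inv_eq_mul]
    ring

lemma integral_sqrt_mul_div_sub (hlu : l ≤ u) (hz : u ≤ z) :
    ∫ x in l..u, √((u - x) * (x - l)) / (z - x) =
      π * (z - (l + u) / 2 - √((z - l) * (z - u))) := by
  rcases hlu.eq_or_lt with rfl | hlu
  · rw [integral_same, ← sq, sqrt_sq (by linarith)]
    ring
  have hhalf : 0 < (u - l) / 2 := by linarith
  obtain ⟨c, hc⟩ : ∃ c, ((u - l) / 2)⁻¹ * (z - (l + u) / 2) = c := ⟨_, rfl⟩
  have hc_le : 1 ≤ c := hc ▸ one_le_inv_half_length_mul_sub_midpoint hlu hz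
  have hz_eq : z - (l + u) / 2 = (u - l) / 2 * c := by rw [← hc, mul_inv_cancel_left₀ hhalf.ne']
  have hroot : √((z - l) * (z - u)) = (u - l) / 2 * √(c ^ 2 - 1) := by
    have : (z - l) * (z - u) = ((u - l) / 2) ^ 2 * (c ^ 2 - 1) := by
      linear_combination (z - (l + u) / 2 + (u - l) / 2 * c) * hz_eq
    rw [this, sqrt_mul (sq_nonneg _), sqrt_sq hhalf.le]
  have hleft : ((u - l) / 2)⁻¹ * (l - (l + u) / 2) = -1 := by
    rw [inv_mul_eq_iff_eq_mul₀ hhalf.ne']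
    ring
  have hright : ((u - l) / 2)⁻¹ * (u - (l + u) / 2) = 1 := by
    rw [inv_mul_eq_iff_eq_mul₀ hhalf.ne']
    ring
  simp only [sqrt_mul_div_sub_eq_rescale hlu z, hc]
  rw [integral_comp_sub_right fun x => √(1 - (((u - l) / 2)⁻¹ * x) ^ 2) / (c - ((u - l) / 2)⁻¹ * x),
    integral_comp_mul_left (fun s => √(1 - s ^ 2) / (c - s)) (inv_ne_zero hhalf.ne'),
    hleft, hright, integral_sqrt_one_sub_sq_div_sub hc_le, hroot, hz_eq, smul_eq_mul, inv_inv]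
  ring

lemma intervalIntegrable_sqrt_mul_div_sub_left (hlu : l ≤ u) (hz : z ≤ l) :
    IntervalIntegrable (fun x => √((u - x) * (x - l)) / (x - z)) volume l u := by
  have hreflect := (IntervalIntegrable.iff_comp_neg (by finiteness)).mp
    (intervalIntegrable_sqrt_mul_div_sub (neg_le_neg hlu) (neg_le_neg hz)).symm
  simpa only [neg_neg, neg_sub_neg, mul_comm (_ - l)] using hreflect

lemma integral_sqrt_mul_div_sub_left (hlu : l ≤ u) (hz : z ≤ l) :
    ∫ x in l..u, √((u - x) * (x - l)) / (x - z) =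
      π * ((l + u) / 2 - z - √((l - z) * (u - z))) := by
  have hreflect := integral_sqrt_mul_div_sub (neg_le_neg hlu) (neg_le_neg hz)
  rw [← integral_comp_neg] at hreflect
  simp only [neg_sub_neg, mul_comm (_ - l), mul_comm (u - z)] at hreflect
  rw [hreflect]
  ring

lemma one_div_mul_div_partialFractions {x : ℝ} (hx₀ : x ≠ 0) (hx₁ : x ≠ 1) (hz₀ : z ≠ 0)
    (hz₁ : z ≠ 1) (hxz : x ≠ z) (y : ℝ) :
    1 / (z - x) * (y / (x * (1 - x))) =
      1 / z * (y / x) + 1 / (z - 1) * (y / (1 - x)) - 1 / (z * (z - 1)) * (y / (z - x)) := by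
  have hx₁' : 1 - x ≠ 0 := sub_ne_zero.2 hx₁.symm
  have hz₁' : z - 1 ≠ 0 := sub_ne_zero.2 hz₁
  have hxz' : z - x ≠ 0 := sub_ne_zero.2 hxz.symm
  field_simp
  ring

lemma integral_sqrt_mul_div_three_poles (hl : 0 ≤ l) (hlu : l ≤ u) (hu : u ≤ 1) (hz : u ≤ z)
    (hz₀ : z ≠ 0) (hz₁ : z ≠ 1) :
    ∫ x in l..u, 1 / (z - x) * (√((u - x) * (x - l)) / (x * (1 - x))) =
      π * ((√((z - l) * (z - u)) - (z - 1) * √(l * u) - z * √((1 - l) * (1 - u))) /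
        (z * (z - 1))) := by
  have hint₀ : IntervalIntegrable (fun x => √((u - x) * (x - l)) / x) volume l u := by
    simpa using intervalIntegrable_sqrt_mul_div_sub_left hlu hl
  have hval₀ : ∫ x in l..u, √((u - x) * (x - l)) / x = π * ((l + u) / 2 - √(l * u)) := by
    simpa using integral_sqrt_mul_div_sub_left hlu hl
  have hint₁ := intervalIntegrable_sqrt_mul_div_sub hlu hu
  have hint := intervalIntegrable_sqrt_mul_div_sub hlu hz
  calc
    _ = ∫ x in l..u, (1 / z * (√((u - x) * (x - l)) / x) +
          1 / (z - 1) * (√((u - x) * (x - l)) / (1 - x)) -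
          1 / (z * (z - 1)) * (√((u - x) * (x - l)) / (z - x))) :=
      integral_congr_Ioo_of_le hlu fun x hx =>
        one_div_mul_div_partialFractions (hl.trans_lt hx.1).ne' (hx.2.trans_le hu).ne hz₀ hz₁
          (hx.2.trans_le hz).ne _
    _ = 1 / z * (π * ((l + u) / 2 - √(l * u))) +
          1 / (z - 1) * (π * (1 - (l + u) / 2 - √((1 - l) * (1 - u)))) -
          1 / (z * (z - 1)) * (π * (z - (l + u) / 2 - √((z - l) * (z - u)))) := by
      rw [integral_sub ((hint₀.const_mul _).add (hint₁.const_mul _)) (hint.const_mul _),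
        integral_add (hint₀.const_mul _) (hint₁.const_mul _)]
      simp only [intervalIntegral.integral_const_mul]
      rw [hval₀, integral_sqrt_mul_div_sub hlu hu, integral_sqrt_mul_div_sub hlu hz]
    _ = _ := by
      have hz₁' : z - 1 ≠ 0 := sub_ne_zero.2 hz₁
      field_simp
      ring

end SemicircleCauchyTransform

section Wachter

/-- The lower edge `μ₋` of the support of the Wachter law. -/
noncomputable def wachterLowerEdge (a b : ℝ) : ℝ :=
  ((√b - √(a * (a + b - 1))) / (a + b)) ^ 2

/-- The upper edge `μ₊` of the support of the Wachter law. -/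
noncomputable def wachterUpperEdge (a b : ℝ) : ℝ :=
  ((√b + √(a * (a + b - 1))) / (a + b)) ^ 2

/-- The Cauchy transform `G(z) = ∫ dμ(x) / (z - x)` of the Wachter law `μ` with parameters
`a, b ≥ 1`, for real `z`, written as an integral against its Lebesgue density. -/
noncomputable def wachterCauchyTransform (a b z : ℝ) : ℝ :=
  ∫ x in wachterLowerEdge a b..wachterUpperEdge a b,
    (1 / (z - x)) *
      ((a + b) * √((wachterUpperEdge a b - x) * (x - wachterLowerEdge a b)) / (2 * π * x * (1 - x)))

/-- The closed form of the R-transform of the Wachter law. At `w = 0` division by zero gives the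
value `0` rather than the limit `a / (a + b)`. -/
noncomputable def wachterRTransform (a b w : ℝ) : ℝ :=
  (-a - b + w + √((a + b) ^ 2 + 2 * (a - b) * w + w ^ 2)) / (2 * w)

variable {a b w z : ℝ}

lemma wachterLowerEdge_nonneg (a b : ℝ) : 0 ≤ wachterLowerEdge a b :=
  sq_nonneg _

lemma wachterLowerEdge_le_wachterUpperEdge (a b : ℝ) :
    wachterLowerEdge a b ≤ wachterUpperEdge a b := by
  have hprod := mul_nonneg (sqrt_nonneg b) (sqrt_nonneg (a * (a + b - 1)))
  rw [wachterLowerEdge, wachterUpperEdge, div_pow, div_pow]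
  gcongr ?_ / _
  nlinarith

lemma wachterUpperEdge_pos (hb : 0 < b) (hab : 0 < a + b) : 0 < wachterUpperEdge a b := by
  rw [wachterUpperEdge]
  positivity

lemma wachterUpperEdge_le_one (ha : 0 ≤ a) (hb : 0 ≤ b) (hab : 1 ≤ a + b) :
    wachterUpperEdge a b ≤ 1 := by
  have hα : 0 ≤ a * (a + b - 1) := mul_nonneg ha (by linarith)
  have hβ : 0 ≤ b * (a + b - 1) := mul_nonneg hb (by linarith)
  have hcross : √b * √(a * (a + b - 1)) ≤ (a + b * (a + b - 1)) / 2 := by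
    rw [← sqrt_mul hb, sqrt_le_left (by linarith)]
    linarith [sq_nonneg (a - b * (a + b - 1))]
  rw [wachterUpperEdge, div_pow, div_le_one (by positivity), add_sq, sq_sqrt hb, sq_sqrt hα]
  linarith

lemma wachterLowerEdge_add_wachterUpperEdge (hb : 0 ≤ b) (hα : 0 ≤ a * (a + b - 1)) :
    wachterLowerEdge a b + wachterUpperEdge a b = 2 * (b + a * (a + b - 1)) / (a + b) ^ 2 := by
  rw [wachterLowerEdge, wachterUpperEdge, div_pow, div_pow, ← add_div, sub_sq, add_sq,
    sq_sqrt hb, sq_sqrt hα]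
  ring

lemma wachterLowerEdge_mul_wachterUpperEdge (hb : 0 ≤ b) (hα : 0 ≤ a * (a + b - 1))
    (hab : a + b ≠ 0) :
    wachterLowerEdge a b * wachterUpperEdge a b = ((a - 1) / (a + b)) ^ 2 := by
  have hdiff : (√b - √(a * (a + b - 1))) * (√b + √(a * (a + b - 1))) = (a + b) * (1 - a) := by
    linear_combination sq_sqrt hb - sq_sqrt hα
  rw [wachterLowerEdge, wachterUpperEdge, ← mul_pow, div_mul_div_comm, hdiff,
    mul_div_mul_left _ _ hab, ← neg_sub, neg_div, neg_sq]

lemma sub_wachterLowerEdge_mul_sub_wachterUpperEdge (hb : 0 ≤ b) (hα : 0 ≤ a * (a + b - 1))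
    (hab : a + b ≠ 0) (z : ℝ) :
    (z - wachterLowerEdge a b) * (z - wachterUpperEdge a b) =
      (((a + b - 2) * z - (a - 1)) ^ 2 + 4 * (a + b - 1) * z * (z - 1)) / (a + b) ^ 2 := by
  calc
    _ = z ^ 2 - (wachterLowerEdge a b + wachterUpperEdge a b) * z +
          wachterLowerEdge a b * wachterUpperEdge a b := by ring
    _ = z ^ 2 - 2 * (b + a * (a + b - 1)) / (a + b) ^ 2 * z + ((a - 1) / (a + b)) ^ 2 := by
      rw [wachterLowerEdge_add_wachterUpperEdge hb hα,
        wachterLowerEdge_mul_wachterUpperEdge hb hα hab]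
    _ = _ := by
      field_simp
      ring

lemma wachterCauchyTransform_eq (ha : 1 ≤ a) (hb : 1 ≤ b) (hz : wachterUpperEdge a b ≤ z)
    (hz₁ : z ≠ 1) :
    wachterCauchyTransform a b z =
      (√(((a + b - 2) * z - (a - 1)) ^ 2 + 4 * (a + b - 1) * z * (z - 1)) -
        ((a + b - 2) * z - (a - 1))) / (2 * z * (z - 1)) := by
  have hab : 0 < a + b := by linarith
  have hz₀ : z ≠ 0 := ((wachterUpperEdge_pos (by linarith) hab).trans_le hz).ne'
  have hα : 0 ≤ a * (a + b - 1) := mul_nonneg (by linarith) (by linarith)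
  have hedges := sub_wachterLowerEdge_mul_sub_wachterUpperEdge (by linarith) hα hab.ne'
  have hroot₀ : √(wachterLowerEdge a b * wachterUpperEdge a b) = (a - 1) / (a + b) := by
    rw [wachterLowerEdge_mul_wachterUpperEdge (by linarith) hα hab.ne',
      sqrt_sq (div_nonneg (by linarith) hab.le)]
  have hroot₁ : √((1 - wachterLowerEdge a b) * (1 - wachterUpperEdge a b)) =
      (b - 1) / (a + b) := by
    have : (1 - wachterLowerEdge a b) * (1 - wachterUpperEdge a b) = ((b - 1) / (a + b)) ^ 2 := by
      rw [hedges 1, div_pow]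
      ring
    rw [this, sqrt_sq (div_nonneg (by linarith) hab.le)]
  have hnormalize (x y : ℝ) : 1 / (z - x) * ((a + b) * y / (2 * π * x * (1 - x))) =
      (a + b) / (2 * π) * (1 / (z - x) * (y / (x * (1 - x)))) := by
    rw [mul_assoc (2 * π), mul_div_mul_comm, mul_left_comm]
  simp only [wachterCauchyTransform, hnormalize]
  rw [intervalIntegral.integral_const_mul,
    integral_sqrt_mul_div_three_poles (wachterLowerEdge_nonneg a b)
      (wachterLowerEdge_le_wachterUpperEdge a b)
      (wachterUpperEdge_le_one (by linarith) (by linarith) (by linarith)) hz hz₀ hz₁,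
    hroot₀, hroot₁, hedges z, sqrt_div' _ (sq_nonneg _), sqrt_sq hab.le]
  have hz₁' : z - 1 ≠ 0 := sub_ne_zero.2 hz₁
  field_simp
  ring

lemma wachterCauchyTransform_eq_of_quadratic (ha : 1 ≤ a) (hb : 1 ≤ b) (hw : 0 ≤ w) (hz : 1 < z)
    (hquad : z * (z - 1) * w ^ 2 + ((a + b - 2) * z - (a - 1)) * w = a + b - 1) :
    wachterCauchyTransform a b z = w := by
  have hz₀ : 0 < z := by linarith
  have hz₁ : 0 < z - 1 := by linarith
  have hdisc : ((a + b - 2) * z - (a - 1)) ^ 2 + 4 * (a + b - 1) * z * (z - 1) =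
      (2 * z * (z - 1) * w + ((a + b - 2) * z - (a - 1))) ^ 2 := by
    linear_combination -4 * z * (z - 1) * hquad
  have hnonneg : 0 ≤ 2 * z * (z - 1) * w + ((a + b - 2) * z - (a - 1)) := by
    have ha' : 0 ≤ (a - 1) * (z - 1) := mul_nonneg (by linarith) hz₁.le
    have hb' : 0 ≤ (b - 1) * z := mul_nonneg (by linarith) hz₀.le
    have hzw : 0 ≤ z * (z - 1) * w := by positivity
    linarith
  have hedge : wachterUpperEdge a b ≤ z :=
    (wachterUpperEdge_le_one (by linarith) (by linarith) (by linarith)).trans hz.le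
  rw [wachterCauchyTransform_eq ha hb hedge hz.ne', hdisc, sqrt_sq hnonneg]
  field_simp
  ring

lemma wachterRTransform_add_one_div (hw : w ≠ 0) :
    wachterRTransform a b w + 1 / w =
      (2 - a - b + w + √((a + b) ^ 2 + 2 * (a - b) * w + w ^ 2)) / (2 * w) := by
  rw [wachterRTransform]
  field_simp
  ring

lemma one_lt_wachterRTransform_add_one_div (hw : 0 < w) (hwb : (b - 1) * w < a + b - 1) :
    1 < wachterRTransform a b w + 1 / w := by
  have hsqrt : a + b - 2 + w < √((a + b) ^ 2 + 2 * (a - b) * w + w ^ 2) :=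
    lt_sqrt_of_sq_lt (by linarith)
  rw [wachterRTransform_add_one_div hw.ne', one_lt_div (by positivity)]
  linarith

lemma wachterRTransform_add_one_div_quadratic (hab : 0 ≤ a * b) (hw : w ≠ 0)
    (hz : z = wachterRTransform a b w + 1 / w) :
    z * (z - 1) * w ^ 2 + ((a + b - 2) * z - (a - 1)) * w = a + b - 1 := by
  have hrad : 0 ≤ (a + b) ^ 2 + 2 * (a - b) * w + w ^ 2 := by
    linarith [sq_nonneg (a - b + w)]
  have hroot : √((a + b) ^ 2 + 2 * (a - b) * w + w ^ 2) = 2 * w * z - (2 - a - b + w) := by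
    rw [hz, wachterRTransform_add_one_div hw]
    field_simp
    ring
  have hsq := sq_sqrt hrad
  rw [hroot] at hsq
  linear_combination hsq / 4

lemma wachterCauchyTransform_wachterRTransform_add_one_div (ha : 1 ≤ a) (hb : 1 ≤ b) (hw : 0 < w)
    (hwb : (b - 1) * w < a + b - 1) :
    wachterCauchyTransform a b (wachterRTransform a b w + 1 / w) = w :=
  wachterCauchyTransform_eq_of_quadratic ha hb hw.le (one_lt_wachterRTransform_add_one_div hw hwb)
    (wachterRTransform_add_one_div_quadratic (mul_nonneg (by linarith) (by linarith)) hw.ne' rfl)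

end Wachter

/-- `R(w) = (-a-b+w+√((a+b)²+2(a-b)w+w²))/(2w)` is the R-transform of the Wachter law. -/
theorem wachter_R_transform (a b : ℝ) (ha : 1 ≤ a) (hb : 1 ≤ b) (μm μp : ℝ)
    (hμm : μm = ((Real.sqrt b - Real.sqrt (a * (a + b - 1))) / (a + b)) ^ 2)
    (hμp : μp = ((Real.sqrt b + Real.sqrt (a * (a + b - 1))) / (a + b)) ^ 2)
    (R : ℝ → ℝ)
    (hR : ∀ w : ℝ, w ≠ 0 →
      R w = (-a - b + w + Real.sqrt ((a + b) ^ 2 + 2 * (a - b) * w + w ^ 2)) / (2 * w)) :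
    ∃ ε > 0, ∀ w : ℝ, 0 < w → w < ε →
      μp < R w + 1 / w ∧
      ∫ x in μm..μp,
          (1 / (R w + 1 / w - x)) *
            ((a + b) * Real.sqrt ((μp - x) * (x - μm)) / (2 * π * x * (1 - x)))
        = w := by
  subst hμm hμp
  refine ⟨1, one_pos, fun w hw hw_lt => ?_⟩
  have hwb : (b - 1) * w < a + b - 1 := by nlinarith
  rw [show R w = wachterRTransform a b w from hR w hw.ne']
  exact ⟨(wachterUpperEdge_le_one (by linarith) (by linarith) (by linarith)).trans_lt
    (one_lt_wachterRTransform_add_one_div hw hwb),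
    wachterCauchyTransform_wachterRTransform_add_one_div ha hb hw hwb⟩
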